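/- arXiv:1308.5373 — 2 statements merged into one kernel-verified Lean document; each statement's English description precedes it below -/
import Mathlib

section
/- Let m ≡ 7 (mod 8), q = 3^m, and v = (3^{(m+1)/8}−1)(3^{(m+1)/4}+1)(3^{(m+1)/2}+1). Then the number of pairs (a,b) ∈ GF(q)² such that wt(c(a,b)) = w equals: 1 if w = 0; (3^m−1)(3^{m−1}+3^{(m−1)/2}) if w = 2·3^{m−1} − 3^{(m−1)/2}; (3^m−1)(3^m−2·3^{m−1}+1) if w = 2·3^{m−1}; (3^m−1)(3^{m−1}−3^{(m−1)/2}) if w = 2·3^{m−1} + 3^{(m−1)/2}; and 0 for every other value of w. -/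
/-!
Let `ω` be a primitive cube root of unity. The weight of `c(a, b)` is an affine function of the
integer `T(a, b) = ∑ x, (ω ^ Tr (a x + b x ^ v) + ω ^ (-Tr (a x + b x ^ v)))`, so the task is to
find how often `T` takes each value. The exponent `v` is even and `v (3 ^ k + 1) ≡ 2` modulo
`3 ^ m - 1`, where `k = (m + 1) / 8`. Since `-1` is not a square, each `x` is `± y ^ (3 ^ k + 1)`
with the sign given by the quadratic character of `y`; therefore `2 T(a, b) = S(a, b) + S(-a, b)`,
where `S(a, b)` is the analogous sum over the quadratic form
`Q y = Tr (a y ^ (3 ^ k + 1) + b y ^ 2)`.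

If `Q` has radical of dimension `r`, then `∑ y, ω ^ Q y` has squared modulus `3 ^ (m + r)`, and
solving `X ^ 2 + 3 Y ^ 2 = 4 * 3 ^ (m + r)` with `Y` even gives `S = 0` when `m + r` is odd and
`S = ± 2 * 3 ^ ((m + r) / 2)` when it is even. The radical consists of the solutions of a
second-order recurrence under the Frobenius power `σ = (· ^ 3 ^ k)`; its Casoratian is fixed by
`σ`, hence lies in `𝔽₃`, which gives `r ≤ 2`. For solutions of the recurrences attached to `a` and
`-a` a Casoratian with one sign changed is negated by `σ`, hence vanishes, so at least one of the
two radicals is trivial. Thus `T(a, b)` is `0` or `± 3 ^ ((m + 1) / 2)` for `(a, b) ≠ 0`, and the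
first two power moments of `T` determine the three frequencies.
-/

open Finset Module
open QuadraticMap (polar mem_radical_iff' radical_eq_ker_polarBilin radical_le_ker_polarBilin)

instance invertibleTwoZModThree : Invertible (2 : ZMod 3) := ⟨2, by decide, by decide⟩

lemma eq_zero_of_add_self_eq_zero (K : Type*) {V : Type*} [Ring K] [Invertible (2 : K)]
    [AddCommGroup V] [Module K V] {x : V} (h : x + x = 0) : x = 0 := by
  rw [← invOf_two_smul_add_invOf_two_smul K x, ← smul_add, h, smul_zero]

/-- The integer `ω ^ c + ω ^ (-c)`, where `ω` is a primitive cube root of unity: twice the real part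
of the additive character `ω ^ c`. -/
def eisRe (c : ZMod 3) : ℤ := if c = 0 then 2 else -1

/-- The integer `(ω ^ c - ω ^ (-c)) / √-3`, where `ω = (-1 + √-3) / 2`, so that
`2 ω ^ c = eisRe c + eisIm c * √-3`. -/
def eisIm (c : ZMod 3) : ℤ := if c = 0 then 0 else if c = 1 then 1 else -1

lemma eisRe_zero : eisRe 0 = 2 := rfl

lemma eisRe_eq_two_sub_ite (c : ZMod 3) : eisRe c = 2 - 3 * if c ≠ 0 then 1 else 0 := by
  decide +revert

lemma eisRe_mul (c d : ZMod 3) : eisRe c * eisRe d = eisRe (c + d) + eisRe (c - d) := by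
  decide +revert

lemma eisRe_mul_add_eisIm_mul (c d : ZMod 3) :
    eisRe c * eisRe d + 3 * (eisIm c * eisIm d) = 2 * eisRe (c - d) := by
  decide +revert

lemma eisRe_add_eisRe_add_eisRe (c : ZMod 3) {d : ZMod 3} (hd : d ≠ 0) :
    eisRe c + eisRe (c + d) + eisRe (c + (d + d)) = 0 := by
  decide +revert

lemma sum_eisRe_add_eq_zero {G Φ : Type*} [AddGroup G] [Fintype G] [FunLike Φ G (ZMod 3)]
    [AddMonoidHomClass Φ G (ZMod 3)] (φ : Φ) {y : G} (hy : φ y ≠ 0) (c : ZMod 3) :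
    ∑ x, eisRe (c + φ x) = 0 := by
  have shift (z : G) : ∑ x, eisRe (c + φ x) = ∑ x, eisRe (c + φ x + φ z) := by
    rw [← Equiv.sum_comp (Equiv.addRight z)]
    simp only [Equiv.coe_addRight, map_add, add_assoc]
  have cosets : ∑ x, (eisRe (c + φ x) + eisRe (c + φ x + φ y) +
      eisRe (c + φ x + (φ y + φ y))) = 0 :=
    sum_eq_zero fun x _ ↦ eisRe_add_eisRe_add_eisRe _ hy
  rw [sum_add_distrib, sum_add_distrib, ← map_add, ← shift, ← shift] at cosets
  omega

lemma even_sum_of_even {V : Type*} [AddGroup V] [Fintype V] (hV : ∀ x : V, -x = x → x = 0)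
    {f : V → ℤ} (hf : ∀ x, f (-x) = f x) (hf₀ : f 0 = 0) : Even (∑ x, f x) := by
  rw [← ZMod.intCast_eq_zero_iff_even, Int.cast_sum]
  refine sum_involution (fun x _ ↦ -x) (fun x _ ↦ ?_) (fun x _ hx hfix ↦ hx ?_)
    (fun _ _ ↦ mem_univ _) fun x _ ↦ neg_neg x
  · rw [hf, CharTwo.add_self_eq_zero]
  · rw [hV x hfix, hf₀, Int.cast_zero]

lemma eq_zero_of_sq_add_three_mul_sq_eq_nine_pow {X Y : ℤ} {j : ℕ}
    (h : X ^ 2 + 3 * Y ^ 2 = 9 ^ j) : Y = 0 := by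
  induction j generalizing X Y with
  | zero => exact pow_eq_zero_iff two_ne_zero |>.mp (by nlinarith [sq_nonneg X, sq_nonneg Y])
  | succ j ih =>
    rw [pow_succ 9] at h
    obtain ⟨X', rfl⟩ : 3 ∣ X :=
      Int.prime_three.dvd_of_dvd_pow (n := 2) ⟨3 * 9 ^ j - Y ^ 2, by linarith⟩
    obtain ⟨Y', rfl⟩ : 3 ∣ Y :=
      Int.prime_three.dvd_of_dvd_pow (n := 2) ⟨9 ^ j - X' ^ 2, by linarith⟩
    rw [ih (X := X') (Y := Y') (by linarith), mul_zero]

lemma eq_zero_of_sq_add_three_mul_sq_eq_three_pow {X Y : ℤ} {n : ℕ} (hn : Odd n)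
    (h : X ^ 2 + 3 * Y ^ 2 = 3 ^ n) : X = 0 := by
  obtain ⟨j, rfl⟩ := hn
  rw [pow_succ 3, pow_mul 3] at h
  obtain ⟨X', rfl⟩ : 3 ∣ X :=
    Int.prime_three.dvd_of_dvd_pow (n := 2) ⟨9 ^ j - Y ^ 2, by norm_num at h; linarith⟩
  rw [eq_zero_of_sq_add_three_mul_sq_eq_nine_pow (X := Y) (Y := X') (j := j)
    (by norm_num at h; linarith), mul_zero]

lemma exists_eq_two_mul_of_sq_add_three_mul_sq {X Y N : ℤ} (hY : Even Y)
    (h : X ^ 2 + 3 * Y ^ 2 = 4 * N) :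
    ∃ X' Y', X = 2 * X' ∧ X' ^ 2 + 3 * Y' ^ 2 = N := by
  obtain ⟨Y', rfl⟩ := even_iff_exists_two_mul.mp hY
  have hX : Even (X ^ 2) := ⟨2 * N - 6 * Y' ^ 2, by linarith⟩
  obtain ⟨X', rfl⟩ := even_iff_exists_two_mul.mp ((Int.even_pow' two_ne_zero).mp hX)
  exact ⟨X', Y', rfl, by linarith⟩

section QuadraticForm

variable {V : Type*} [AddCommGroup V] [Module (ZMod 3) V] [Fintype V]
  (Q : QuadraticForm (ZMod 3) V)

lemma sum_eisRe_add_polar [DecidablePred (· ∈ Q.radical)] (w : V) :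
    ∑ z, eisRe (Q w + polar Q w z) = if w ∈ Q.radical then 2 * (Fintype.card V : ℤ) else 0 := by
  split_ifs with hw
  · have hpolar : Q.polarBilin w = 0 := radical_le_ker_polarBilin hw
    have (z : V) : polar Q w z = 0 := DFunLike.congr_fun hpolar z
    simp [this, (mem_radical_iff'.mp hw).1, eisRe_zero, mul_comm]
  · rw [radical_eq_ker_polarBilin, LinearMap.mem_ker] at hw
    obtain ⟨z, hz⟩ := DFunLike.ne_iff.mp hw
    exact sum_eisRe_add_eq_zero (Q.polarBilin w) hz (Q w)

lemma sum_eisRe_sq_add_sum_eisIm_sq :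
    (∑ x, eisRe (Q x)) ^ 2 + 3 * (∑ x, eisIm (Q x)) ^ 2 =
      4 * 3 ^ (finrank (ZMod 3) V + finrank (ZMod 3) Q.radical) := by
  classical
  calc (∑ x, eisRe (Q x)) ^ 2 + 3 * (∑ x, eisIm (Q x)) ^ 2
      = ∑ z, ∑ y, 2 * eisRe (Q y - Q z) := by
        rw [pow_two, pow_two, sum_mul_sum, sum_mul_sum]
        simp only [mul_sum, ← sum_add_distrib]
        rw [sum_comm]
        simp only [eisRe_mul_add_eisIm_mul]
    _ = ∑ z, ∑ w, 2 * eisRe (Q w + polar Q w z) := by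
        refine sum_congr rfl fun z _ ↦ ?_
        rw [← Equiv.sum_comp (Equiv.addRight z)]
        refine sum_congr rfl fun w _ ↦ ?_
        rw [Equiv.coe_addRight, polar]
        ring_nf
    _ = ∑ w, 2 * if w ∈ Q.radical then 2 * (Fintype.card V : ℤ) else 0 := by
        rw [sum_comm]
        simp only [← mul_sum, sum_eisRe_add_polar]
    _ = 4 * (Fintype.card V * Fintype.card Q.radical) := by
        rw [← mul_sum, ← sum_filter, sum_const, ← Fintype.card_subtype, nsmul_eq_mul]
        change 2 * ((Fintype.card Q.radical : ℤ) * _) = _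
        ring
    _ = 4 * 3 ^ (finrank (ZMod 3) V + finrank (ZMod 3) Q.radical) := by
        rw [card_eq_pow_finrank (K := ZMod 3) (V := V),
          card_eq_pow_finrank (K := ZMod 3) (V := Q.radical), ZMod.card, pow_add]
        push_cast
        rfl

lemma even_sum_eisIm : Even (∑ x, eisIm (Q x)) := by
  refine even_sum_of_even (fun x hx ↦ eq_zero_of_add_self_eq_zero (ZMod 3) ?_)
    (fun x ↦ by rw [Q.map_neg]) (by rw [Q.map_zero]; rfl)
  rw [← neg_eq_iff_add_eq_zero, hx]

variable {Q}

lemma sum_eisRe_eq_zero_of_odd (h : Odd (finrank (ZMod 3) V + finrank (ZMod 3) Q.radical)) :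
    ∑ x, eisRe (Q x) = 0 := by
  obtain ⟨X, Y, hX, hXY⟩ := exists_eq_two_mul_of_sq_add_three_mul_sq (even_sum_eisIm Q)
    (sum_eisRe_sq_add_sum_eisIm_sq Q)
  rw [hX, eq_zero_of_sq_add_three_mul_sq_eq_three_pow h hXY, mul_zero]

lemma sum_eisRe_sq_of_even (h : Even (finrank (ZMod 3) V + finrank (ZMod 3) Q.radical)) :
    (∑ x, eisRe (Q x)) ^ 2 = 4 * 3 ^ (finrank (ZMod 3) V + finrank (ZMod 3) Q.radical) := by
  obtain ⟨X, Y, hX, hXY⟩ := exists_eq_two_mul_of_sq_add_three_mul_sq (even_sum_eisIm Q)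
    (sum_eisRe_sq_add_sum_eisIm_sq Q)
  obtain ⟨j, hj⟩ := even_iff_exists_two_mul.mp h
  have hY : Y = 0 := eq_zero_of_sq_add_three_mul_sq_eq_nine_pow (X := X) (j := j)
    (by rw [hXY, hj, pow_mul]; norm_num)
  rw [hX, mul_pow, ← hXY, hY]
  ring

lemma sum_eisRe_eq_zero_or_sq_eq (hV : Odd (finrank (ZMod 3) V))
    (hQ : finrank (ZMod 3) Q.radical ≤ 2) :
    ∑ x, eisRe (Q x) = 0 ∨ (∑ x, eisRe (Q x)) ^ 2 = 4 * 3 ^ (finrank (ZMod 3) V + 1) := by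
  obtain hd | hd | hd : finrank (ZMod 3) Q.radical = 0 ∨ finrank (ZMod 3) Q.radical = 1 ∨
      finrank (ZMod 3) Q.radical = 2 := by omega
  · exact .inl (sum_eisRe_eq_zero_of_odd (hd ▸ hV))
  · exact .inr (hd ▸ sum_eisRe_sq_of_even (hd ▸ hV.add_one))
  · exact .inl (sum_eisRe_eq_zero_of_odd (hd ▸ hV.add_even even_two))

end QuadraticForm

section TwistedForm

variable {K F : Type*} [Field K] [Field F] [Algebra K F] (σ : F ≃ₐ[K] F) {a b y z w : F}

/-- The quadratic form `y ↦ Tr (a y σ(y) + b y ^ 2)`; when `σ` is a power of Frobenius its first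
term is `Tr (a y ^ (3 ^ k + 1))`. -/
noncomputable def twistedTraceForm (a b : F) : QuadraticForm K F :=
  LinearMap.BilinMap.toQuadraticMap
    ((Algebra.traceForm K F).compl₂ (a • σ.toLinearMap + b • LinearMap.id))

lemma twistedTraceForm_apply (a b y : F) :
    twistedTraceForm σ a b y = Algebra.trace K F (a * (σ y * y) + b * y ^ 2) := by
  simp only [twistedTraceForm, LinearMap.BilinMap.toQuadraticMap_apply, LinearMap.compl₂_apply,
    Algebra.traceForm_apply, LinearMap.add_apply, LinearMap.smul_apply, AlgEquiv.toLinearMap_apply,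
    LinearMap.id_apply, smul_eq_mul]
  ring_nf

lemma polar_twistedTraceForm (a b w y : F) :
    polar (twistedTraceForm σ a b) w y =
      Algebra.traceForm K F (σ.symm (a * w) + a * σ w + 2 * b * w) y := by
  have adjoint : Algebra.trace K F (σ.symm (a * w) * y) = Algebra.trace K F (a * w * σ y) := by
    rw [← Algebra.trace_eq_of_algEquiv σ, map_mul, σ.apply_symm_apply]
  rw [Algebra.traceForm_apply, add_mul, add_mul, map_add, map_add, adjoint]
  simp only [polar, twistedTraceForm_apply, ← map_add, ← map_sub]
  rw [map_add σ]
  ring_nf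

lemma mem_radical_twistedTraceForm [FiniteDimensional K F] [Algebra.IsSeparable K F]
    [Invertible (2 : K)] :
    w ∈ (twistedTraceForm σ a b).radical ↔ σ.symm (a * w) + a * σ w + 2 * b * w = 0 := by
  rw [radical_eq_ker_polarBilin, LinearMap.mem_ker,
    show (twistedTraceForm σ a b).polarBilin w = Algebra.traceForm K F _ from
      LinearMap.ext (polar_twistedTraceForm σ a b w)]
  exact map_eq_zero_iff _
    (LinearMap.ker_eq_bot.mp (traceForm_nondegenerate K F).ker_eq_bot)

/-- The Casoratian (discrete Wronskian) `a (y σ(z) - z σ(y))` of the recurrence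
`σ⁻¹(a y) + a σ(y) + 2 b y = 0` that cuts out the radical of `twistedTraceForm σ a b`, as a linear
map in `z`. -/
noncomputable def casoratian (a y : F) : F →ₗ[K] F where
  toFun z := a * (y * σ z - z * σ y)
  map_add' z w := by rw [map_add]; ring
  map_smul' r z := by simp only [map_smul, mul_smul_comm, smul_mul_assoc, ← smul_sub]; rfl

lemma casoratian_apply (a y z : F) : casoratian σ a y z = a * (y * σ z - z * σ y) := rfl

variable {σ}

lemma map_casoratian (hy : σ.symm (a * y) + a * σ y + 2 * b * y = 0)
    (hz : σ.symm (a * z) + a * σ z + 2 * b * z = 0) :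
    σ (casoratian σ a y z) = casoratian σ a y z := by
  refine (σ.symm_apply_eq.mp ?_).symm
  have expand : σ.symm (casoratian σ a y z) = σ.symm (a * y) * z - σ.symm (a * z) * y := by
    rw [σ.symm_apply_eq]
    simp only [casoratian_apply, map_sub, map_mul, σ.apply_symm_apply]
    ring
  rw [expand, casoratian_apply]
  linear_combination z * hy - y * hz

lemma map_div_of_casoratian_eq_zero (ha : a ≠ 0) (hy : y ≠ 0) (h : casoratian σ a y z = 0) :
    σ (z / y) = z / y := by
  have hzy : y * σ z - z * σ y = 0 := (mul_eq_zero_iff_left ha).mp h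
  rw [map_div₀, div_eq_div_iff ((map_ne_zero σ).mpr hy) hy]
  linear_combination hzy

variable [FiniteDimensional K F] [Algebra.IsSeparable K F] [Invertible (2 : K)]

lemma finrank_radical_twistedTraceForm_le_two (hσ : ∀ x, σ x = x → x ∈ (⊥ : Subalgebra K F))
    (ha : a ≠ 0) : finrank K (twistedTraceForm σ a b).radical ≤ 2 := by
  set R := (twistedTraceForm σ a b).radical
  obtain hbot | hbot := eq_or_ne R ⊥
  · rw [hbot, finrank_bot]
    exact zero_le_two
  obtain ⟨y, hyR, hy⟩ := R.exists_mem_ne_zero_of_ne_bot hbot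
  have hrange : finrank K ((casoratian σ a y).domRestrict R).range ≤ 1 := by
    rw [← Subalgebra.finrank_bot (F := K) (E := F)]
    refine Submodule.finrank_mono (t := Subalgebra.toSubmodule ⊥) ?_
    rintro _ ⟨⟨z, hzR⟩, rfl⟩
    exact hσ _ (map_casoratian ((mem_radical_twistedTraceForm σ).mp hyR)
      ((mem_radical_twistedTraceForm σ).mp hzR))
  have hker : finrank K ((casoratian σ a y).domRestrict R).ker ≤ 1 := by
    refine finrank_le_one ⟨⟨y, hyR⟩, by simp [casoratian_apply]⟩ ?_
    rintro ⟨⟨z, _⟩, hz⟩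
    obtain ⟨r, hr⟩ := Algebra.mem_bot.mp (hσ _ (map_div_of_casoratian_eq_zero ha hy hz))
    refine ⟨r, Subtype.ext <| Subtype.ext ?_⟩
    simp [Algebra.smul_def, hr, hy]
  have := ((casoratian σ a y).domRestrict R).finrank_range_add_finrank_ker
  omega

lemma eq_zero_or_eq_zero_of_mem_radical (hσ : ∀ x, σ x = -x → x = 0) (ha : a ≠ 0)
    (hy : y ∈ (twistedTraceForm σ a b).radical) (hz : z ∈ (twistedTraceForm σ (-a) b).radical) :
    y = 0 ∨ z = 0 := by
  rw [mem_radical_twistedTraceForm] at hy hz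
  -- The two recurrences differ by the sign of `a`, so a Casoratian with one sign changed is used.
  have hu : σ.symm (a * (y * σ z + z * σ y)) = -(a * (y * σ z + z * σ y)) := by
    have expand : σ.symm (a * (y * σ z + z * σ y)) =
        σ.symm (a * y) * z + σ.symm (a * z) * y := by
      rw [σ.symm_apply_eq]
      simp only [map_add, map_mul, σ.apply_symm_apply]
      ring
    rw [neg_mul, map_neg] at hz
    rw [expand]
    linear_combination z * hy - y * hz
  have hsum : y * σ z + z * σ y = 0 := by
    refine (mul_eq_zero_iff_left ha).mp (hσ _ ?_)
    rw [σ.symm_apply_eq, map_neg] at hu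
    exact neg_eq_iff_eq_neg.mp hu.symm
  refine or_iff_not_imp_left.mpr fun hy0 ↦ ?_
  have hdiv : σ (z / y) = -(z / y) := by
    rw [map_div₀, ← neg_div, div_eq_div_iff ((map_ne_zero σ).mpr hy0) hy0]
    linear_combination hsum
  exact (div_eq_zero_iff.mp (hσ _ hdiv)).resolve_right hy0

lemma radical_twistedTraceForm_eq_bot_or_neg_eq_bot (hσ : ∀ x, σ x = -x → x = 0) (ha : a ≠ 0) :
    (twistedTraceForm σ a b).radical = ⊥ ∨ (twistedTraceForm σ (-a) b).radical = ⊥ := by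
  refine or_iff_not_imp_left.mpr fun h ↦ (Submodule.eq_bot_iff _).mpr fun z hz ↦ ?_
  obtain ⟨y, hy, hy₀⟩ := Submodule.exists_mem_ne_zero_of_ne_bot h
  exact (eq_zero_or_eq_zero_of_mem_radical hσ ha hy hz).resolve_left hy₀

lemma radical_twistedTraceForm_zero_left (hb : b ≠ 0) :
    (twistedTraceForm σ 0 b).radical = ⊥ := by
  refine (Submodule.eq_bot_iff _).mpr fun w hw ↦ ?_
  rw [mem_radical_twistedTraceForm] at hw
  have hbw : b * w = 0 := eq_zero_of_add_self_eq_zero K <| by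
    rw [zero_mul, zero_mul, map_zero] at hw
    linear_combination hw
  exact (mul_eq_zero_iff_left hb).mp hbw

end TwistedForm

section Frobenius

lemma frobeniusAlgEquiv_pow_apply {p : ℕ} [Fact p.Prime] {F : Type*} [Field F]
    [Algebra (ZMod p) F] [Algebra.IsAlgebraic (ZMod p) F] (k : ℕ) (x : F) :
    (FiniteField.frobeniusAlgEquivOfAlgebraic (ZMod p) F ^ k) x = x ^ p ^ k := by
  rw [AlgEquiv.coe_pow, FiniteField.coe_frobeniusAlgEquivOfAlgebraic_iterate, ZMod.card]

variable {F : Type*} [Field F] [Fintype F] {p m k : ℕ}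

lemma pow_char_eq_self_of_pow_eq_self (hF : Fintype.card F = p ^ m) (hk : k.Coprime m) {x : F}
    (hx : x ^ p ^ k = x) : x ^ p = x := by
  have iterate (n : ℕ) : (· ^ p)^[n] x = x ^ p ^ n := congrFun (pow_iterate p n) x
  have hpk : Function.IsPeriodicPt (· ^ p) k x := (iterate k).trans hx
  have hpm : Function.IsPeriodicPt (· ^ p) m x := by
    rw [Function.IsPeriodicPt, Function.IsFixedPt, iterate, ← hF, FiniteField.pow_card]
  exact (hk ▸ hpk.gcd hpm :)

variable [Fact p.Prime] [Algebra (ZMod p) F]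

lemma mem_bot_of_frobeniusAlgEquiv_pow_eq_self (hF : Fintype.card F = p ^ m) (hk : k.Coprime m)
    (x : F) (hx : (FiniteField.frobeniusAlgEquivOfAlgebraic (ZMod p) F ^ k) x = x) :
    x ∈ (⊥ : Subalgebra (ZMod p) F) := by
  rw [frobeniusAlgEquiv_pow_apply] at hx
  have : CharP F p := charP_of_injective_algebraMap (algebraMap (ZMod p) F).injective p
  obtain ⟨n, rfl⟩ := (mem_bot_iff_intCast p F).mp <|
    (Subfield.mem_bot_iff_pow_eq_self F p).mpr (pow_char_eq_self_of_pow_eq_self hF hk hx)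
  exact intCast_mem _ n

lemma eq_zero_of_frobeniusAlgEquiv_pow_eq_neg (hp : p ≠ 2) (hF : Fintype.card F = p ^ m)
    (hm : Odd m) (hk : k.Coprime m) (x : F)
    (hx : (FiniteField.frobeniusAlgEquivOfAlgebraic (ZMod p) F ^ k) x = -x) : x = 0 := by
  set σ := FiniteField.frobeniusAlgEquivOfAlgebraic (ZMod p) F ^ k with hσ
  have hxx : (FiniteField.frobeniusAlgEquivOfAlgebraic (ZMod p) F ^ (k * 2)) x = x := by
    rw [pow_mul, ← hσ, pow_two, AlgEquiv.mul_apply, hx, map_neg, hx, neg_neg]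
  obtain ⟨c, rfl⟩ := Algebra.mem_bot.mp
    (mem_bot_of_frobeniusAlgEquiv_pow_eq_self hF (hk.mul_left hm.coprime_two_left) x hxx)
  have : CharP F p := charP_of_injective_algebraMap (algebraMap (ZMod p) F).injective p
  have hchar : ringChar F ≠ 2 := by rwa [ringChar.eq F p]
  rw [AlgEquiv.commutes] at hx
  exact (Ring.eq_self_iff_eq_zero_of_char_ne_two hchar).mp hx.symm

end Frobenius

section SignedPower

variable {F : Type*} [Field F] [Fintype F]

lemma quadraticChar_neg_of_card_mod_four [DecidableEq F] (hF : Fintype.card F % 4 = 3) (y : F) :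
    quadraticChar F (-y) = -quadraticChar F y := by
  have hneg : quadraticChar F (-1) = -1 := by
    rw [quadraticChar_neg_one_iff_not_isSquare, FiniteField.isSquare_neg_one_iff, not_ne_iff]
    exact hF
  rw [← neg_one_mul, map_mul, hneg, neg_one_mul]

lemma bijective_quadraticChar_mul_pow [DecidableEq F] (hF : Fintype.card F % 4 = 3) {e v : ℕ}
    (he : Even e) (hv : Even v) (hev : ∀ y : F, y ^ (e * v) = y ^ 2) :
    Function.Bijective fun y : F ↦ (quadraticChar F y : F) * y ^ e := by
  -- `θ` is odd because `-1` is not a square, and `θ y ^ v = y ^ 2`; so `θ y = θ z` forces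
  -- `y = ± z`, and oddness decides the sign.
  set θ := fun y : F ↦ (quadraticChar F y : F) * y ^ e
  have hchar : ringChar F ≠ 2 := fun h ↦ by
    have := FiniteField.even_card_iff_char_two.mp h
    omega
  have hθneg (y : F) : θ (-y) = -θ y := by
    simp only [θ, quadraticChar_neg_of_card_mod_four hF, he.neg_pow, Int.cast_neg, neg_mul]
  have hv₀ : v ≠ 0 := by rintro rfl; simpa using hev 0
  have hθv (y : F) : θ y ^ v = y ^ 2 := by
    obtain rfl | hy := eq_or_ne y 0
    · simp [θ, hv₀]
    · rw [mul_pow, ← pow_mul, hev]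
      rcases quadraticChar_dichotomy hy with h | h <;> rw [h] <;> simp [hv.neg_pow]
  have hθ₀ (y : F) (hy : θ y = 0) : y = 0 := by
    rw [← sq_eq_zero_iff, ← hθv, hy, zero_pow hv₀]
  refine Finite.injective_iff_bijective.mp fun y z hyz ↦ ?_
  rcases sq_eq_sq_iff_eq_or_eq_neg.mp (by rw [← hθv, hyz, hθv] : y ^ 2 = z ^ 2) with h | h
  · exact h
  · rw [h, hθneg] at hyz
    have hz : θ z = 0 := (Ring.eq_self_iff_eq_zero_of_char_ne_two hchar).mp hyz
    rw [h, hθ₀ z hz, neg_zero]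

lemma sum_add_sum_neg_pow_eq_two_nsmul_sum {M : Type*} [AddCommMonoid M]
    (hF : Fintype.card F % 4 = 3) {e v : ℕ} (he : Even e) (hv : Even v)
    (hev : ∀ y : F, y ^ (e * v) = y ^ 2) (f : F → M) :
    ∑ y, (f (y ^ e) + f (-y ^ e)) = 2 • ∑ x, f x := by
  classical
  have hbij := bijective_quadraticChar_mul_pow hF he hv hev
  calc ∑ y, (f (y ^ e) + f (-y ^ e))
      = ∑ y, (f (quadraticChar F y * y ^ e) + f (-(quadraticChar F y * y ^ e))) := by
        refine sum_congr rfl fun y _ ↦ ?_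
        obtain rfl | hy := eq_or_ne y 0
        · have he₀ : e ≠ 0 := by rintro rfl; simpa using hev 0
          simp [he₀]
        · rcases quadraticChar_dichotomy hy with h | h <;> rw [h] <;> simp [add_comm]
    _ = 2 • ∑ x, f x := by
        rw [sum_add_distrib, hbij.sum_comp f, hbij.sum_comp fun x ↦ f (-x), two_nsmul]
        exact congrArg _ (Equiv.sum_comp (Equiv.neg F) f)

end SignedPower

section Counting

lemma hammingNorm_comp_generator_pow {F M : Type*} [Field F] [Fintype F] [Zero M] [DecidableEq M]
    {n : ℕ} (hn : n = Fintype.card F - 1) {α : Fˣ} (hα : ∀ x : Fˣ, x ∈ Subgroup.zpowers α)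
    {f : F → M} (hf : f 0 = 0) :
    hammingNorm (fun i : Fin n ↦ f (α ^ (i : ℕ))) = #{x | f x ≠ 0} := by
  classical
  obtain rfl : n = orderOf α := by
    rw [orderOf_eq_card_of_forall_mem_zpowers hα, Nat.card_units, Nat.card_eq_fintype_card, hn]
  refine card_nbij (fun i ↦ (α : F) ^ (i : ℕ)) (fun i ↦ by simp) (fun i _ j _ hij ↦ ?_) ?_
  · exact Fin.ext (pow_injOn_Iio_orderOf i.2 j.2 (Units.ext (by simpa using hij)))
  · intro x hx
    have hx₀ : x ≠ 0 := by rintro rfl; simp [hf] at hx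
    obtain ⟨i, hi, hix⟩ :=
      mem_image.mp (mem_zpowers_iff_mem_range_orderOf.mp (hα (Units.mk0 x hx₀)))
    have hix' : (α : F) ^ i = x := congrArg Units.val hix
    exact ⟨⟨i, mem_range.mp hi⟩, by simpa [hix'] using hx, hix'⟩

variable {ι : Type*} [Fintype ι]

lemma card_fiber_eq_one {β : Type*} [DecidableEq β] {f : ι → β} {i₀ : ι}
    (hf : ∀ i ≠ i₀, f i ≠ f i₀) : #{i | f i = f i₀} = 1 :=
  card_eq_one.mpr ⟨i₀, eq_singleton_iff_unique_mem.mpr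
    ⟨by simp, fun i hi ↦ not_imp_comm.mp (hf i) (not_not.mpr (mem_filter.mp hi).2)⟩⟩

lemma sum_comp_eq_add_card_fiber_mul {β : Type*} [DecidableEq β] {f : ι → β} {i₀ : ι} {b c d : β}
    (hf : ∀ i ≠ i₀, f i = b ∨ f i = c ∨ f i = d) (hb : f i₀ ≠ b) (hc : f i₀ ≠ c) (hd : f i₀ ≠ d)
    (hbc : b ≠ c) (hbd : b ≠ d) (hcd : c ≠ d) (g : β → ℤ) :
    ∑ i, g (f i) = g (f i₀) + (#{i | f i = b} * g b +
      (#{i | f i = c} * g c + #{i | f i = d} * g d)) := by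
  classical
  have hone : #{i | f i = f i₀} = 1 := card_fiber_eq_one fun i hi h ↦ by
    rcases hf i hi with h' | h' | h' <;> simp_all only [ne_eq, not_true_eq_false]
  have hmem (i : ι) : f i ∈ ({f i₀, b, c, d} : Finset β) := by
    obtain rfl | hi := eq_or_ne i i₀
    · exact mem_insert_self _ _
    · simpa using .inr (hf i hi)
  rw [← sum_fiberwise_of_maps_to' (fun i _ ↦ hmem i) g, sum_insert (by simp [hb, hc, hd]),
    sum_insert (by simp [hbc, hbd]), sum_pair hcd]
  simp only [sum_const, nsmul_eq_mul, hone, Nat.cast_one, one_mul]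

lemma card_fiber_of_power_moments {s : ℤ} (hs : 0 < s) {f : ι → ℤ} {i₀ : ι}
    (hf₀ : f i₀ = 6 * s ^ 2) (hf : ∀ i ≠ i₀, f i = 0 ∨ f i = 3 * s ∨ f i = -(3 * s))
    (hcard : (Fintype.card ι : ℤ) = 9 * s ^ 4) (hsum : ∑ i, f i = 18 * s ^ 4)
    (hsum_sq : ∑ i, f i ^ 2 = 18 * s ^ 4 * (3 * s ^ 2 + 1)) (t : ℤ) :
    (#{i | f i = t} : ℤ) =
      if t = 6 * s ^ 2 then 1
      else if t = 3 * s then (3 * s ^ 2 - 1) * (s ^ 2 + s)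
      else if t = 0 then (3 * s ^ 2 - 1) * (s ^ 2 + 1)
      else if t = -(3 * s) then (3 * s ^ 2 - 1) * (s ^ 2 - s)
      else 0 := by
  have hs₁ : s ≤ s ^ 2 := by nlinarith
  have moment := sum_comp_eq_add_card_fiber_mul hf (by omega) (by omega) (by omega)
    (by omega) (by omega) (by omega)
  have m₀ := moment fun _ ↦ 1
  have m₁ := moment id
  have m₂ := moment (· ^ 2)
  simp only [sum_const, card_univ, nsmul_eq_mul, hcard] at m₀
  simp only [id, hsum, hf₀] at m₁
  simp only [hsum_sq, hf₀] at m₂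
  have hdiff : (#{i | f i = 3 * s} : ℤ) - #{i | f i = -(3 * s)} = 6 * s ^ 3 - 2 * s :=
    mul_left_cancel₀ (by omega : 3 * s ≠ 0) (by linear_combination -m₁)
  have hadd : (#{i | f i = 3 * s} : ℤ) + #{i | f i = -(3 * s)} = 6 * s ^ 4 - 2 * s ^ 2 :=
    mul_left_cancel₀ (by positivity : 9 * s ^ 2 ≠ 0) (by linear_combination -m₂)
  split_ifs with ht₁ ht₂ ht₃ ht₄
  · rw [ht₁, ← hf₀, card_fiber_eq_one fun i hi h ↦ ?_, Nat.cast_one]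
    have := hf i hi
    omega
  · rw [ht₂]; linarith
  · rw [ht₃]; linarith
  · rw [ht₄]; linarith
  · rw [Nat.cast_eq_zero, card_eq_zero, filter_eq_empty_iff]
    rintro i - rfl
    obtain rfl | hi := eq_or_ne i i₀
    · exact ht₁ hf₀
    · have := hf i hi
      omega

end Counting

section TraceSum

variable {F : Type*} [Field F] [Fintype F] [Algebra (ZMod 3) F] {v : ℕ}

/-- The integer `T(a, b) = ∑ x, (ω ^ Tr (a x + b x ^ v) + ω ^ (-Tr (a x + b x ^ v)))`, twice the
real part of the exponential sum attached to the codeword `c(a, b)`. -/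
noncomputable def traceSum (v : ℕ) (ab : F × F) : ℤ :=
  ∑ x, eisRe (Algebra.trace (ZMod 3) F (ab.1 * x + ab.2 * x ^ v))

lemma traceSum_zero : traceSum v (0 : F × F) = 2 * Fintype.card F := by
  simp [traceSum, eisRe_zero, mul_comm]

lemma sum_eisRe_trace_mul_add_mul [DecidableEq F] (x y : F) :
    ∑ ab : F × F, eisRe (Algebra.trace (ZMod 3) F (ab.1 * x + ab.2 * y)) =
      if x = 0 ∧ y = 0 then 2 * (Fintype.card F : ℤ) ^ 2 else 0 := by
  split_ifs with hxy
  · simp [hxy.1, hxy.2, eisRe_zero, pow_two, mul_comm]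
  · let φ : F × F →ₗ[ZMod 3] ZMod 3 :=
      ((Algebra.traceForm (ZMod 3) F).flip x).coprod ((Algebra.traceForm (ZMod 3) F).flip y)
    have hφ : φ ≠ 0 := fun h ↦ hxy <| by
      have nondeg {z : F} (hz : ∀ u, Algebra.traceForm (ZMod 3) F u z = 0) : z = 0 :=
        (traceForm_nondegenerate (ZMod 3) F).2 z hz
      exact ⟨nondeg fun u ↦ by simpa [φ] using DFunLike.congr_fun h (u, 0),
        nondeg fun u ↦ by simpa [φ] using DFunLike.congr_fun h (0, u)⟩
    obtain ⟨ab, hab⟩ := DFunLike.ne_iff.mp hφ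
    simpa [φ] using sum_eisRe_add_eq_zero φ hab 0

lemma sum_traceSum (hv : v ≠ 0) :
    ∑ ab : F × F, traceSum v ab = 2 * (Fintype.card F : ℤ) ^ 2 := by
  classical
  unfold traceSum
  rw [sum_comm]
  simp only [sum_eisRe_trace_mul_add_mul]
  simp [hv]

lemma sum_traceSum_sq (hv : v ≠ 0) (hv₂ : Even v) :
    ∑ ab : F × F, traceSum v ab ^ 2 =
      2 * (Fintype.card F : ℤ) ^ 2 * (Fintype.card F + 1) := by
  classical
  have hadd (x y : F) : x + y = 0 ∧ x ^ v + y ^ v = 0 ↔ y = 0 ∧ x = 0 := by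
    refine ⟨fun ⟨hxy, hv_xy⟩ ↦ ?_, fun ⟨hy, hx⟩ ↦ by simp [hx, hy, hv]⟩
    rw [eq_neg_of_add_eq_zero_left hxy, hv₂.neg_pow] at hv_xy
    have hy : y = 0 := eq_zero_of_pow_eq_zero (eq_zero_of_add_self_eq_zero (ZMod 3) hv_xy)
    exact ⟨hy, by simpa [hy] using hxy⟩
  have hsub (x y : F) : x - y = 0 ∧ x ^ v - y ^ v = 0 ↔ y = x :=
    ⟨fun h ↦ (sub_eq_zero.mp h.1).symm, by rintro rfl; simp⟩
  calc ∑ ab : F × F, traceSum v ab ^ 2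
      = ∑ x, ∑ y, ∑ ab : F × F,
          (eisRe (Algebra.trace (ZMod 3) F (ab.1 * (x + y) + ab.2 * (x ^ v + y ^ v))) +
            eisRe (Algebra.trace (ZMod 3) F (ab.1 * (x - y) + ab.2 * (x ^ v - y ^ v)))) := by
        simp only [pow_two, traceSum, sum_mul_sum, eisRe_mul, ← map_add, ← map_sub]
        rw [sum_comm]
        refine sum_congr rfl fun x _ ↦ ?_
        rw [sum_comm]
        refine sum_congr rfl fun y _ ↦ sum_congr rfl fun ab _ ↦ ?_
        congr 3 <;> ring
    _ = 2 * (Fintype.card F : ℤ) ^ 2 * (Fintype.card F + 1) := by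
        simp only [sum_add_distrib, sum_eisRe_trace_mul_add_mul, hadd, hsub]
        simp [ite_and]
        ring

lemma three_pow_mod_four {m : ℕ} (hm : Odd m) : 3 ^ m % 4 = 3 := by
  obtain ⟨j, rfl⟩ := hm
  rw [pow_succ, pow_mul, Nat.mul_mod, Nat.pow_mod]
  norm_num

lemma two_mul_traceSum (hF : Fintype.card F % 4 = 3) {e : ℕ} (he : Even e) (hv : Even v)
    (hev : ∀ y : F, y ^ (e * v) = y ^ 2) {σ : F ≃ₐ[ZMod 3] F} (hσ : ∀ y, σ y * y = y ^ e)
    (a b : F) :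
    2 * traceSum v (a, b) =
      ∑ y, eisRe (twistedTraceForm σ a b y) + ∑ y, eisRe (twistedTraceForm σ (-a) b y) := by
  rw [traceSum, ← smul_eq_mul, ← Nat.cast_ofNat, Nat.cast_smul_eq_nsmul,
    ← sum_add_sum_neg_pow_eq_two_nsmul_sum hF he hv hev, sum_add_distrib]
  simp only [twistedTraceForm_apply, hσ, hv.neg_pow, ← pow_mul, hev, mul_neg, neg_mul]

lemma traceSum_eq_zero_or_sq_eq {m k : ℕ} (hF : Fintype.card F = 3 ^ m) (hm : Odd m)
    (hk : k.Coprime m) (hv : Even v) (hev : ∀ y : F, y ^ ((3 ^ k + 1) * v) = y ^ 2) {ab : F × F}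
    (hab : ab ≠ 0) : traceSum v ab = 0 ∨ traceSum v ab ^ 2 = 3 ^ (m + 1) := by
  obtain ⟨a, b⟩ := ab
  set σ := FiniteField.frobeniusAlgEquivOfAlgebraic (ZMod 3) F ^ k
  have hrank : finrank (ZMod 3) F = m := by
    have := card_eq_pow_finrank (K := ZMod 3) (V := F)
    rw [ZMod.card, hF] at this
    exact (Nat.pow_right_injective (Nat.le_succ 2) this).symm
  have hsum := two_mul_traceSum (hF ▸ three_pow_mod_four hm)
    (Odd.pow (by decide : Odd 3)).add_one hv hev (σ := σ)
    (fun y ↦ by rw [frobeniusAlgEquiv_pow_apply, pow_succ]) a b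
  have hzero {c : F} (h : (twistedTraceForm σ c b).radical = ⊥) :
      ∑ y, eisRe (twistedTraceForm σ c b y) = 0 :=
    sum_eisRe_eq_zero_of_odd (by rwa [h, finrank_bot, hrank])
  have hvalue {c : F} (hc : c ≠ 0) : ∑ y, eisRe (twistedTraceForm σ c b y) = 0 ∨
      (∑ y, eisRe (twistedTraceForm σ c b y)) ^ 2 = 4 * 3 ^ (m + 1) := by
    rw [← hrank]
    exact sum_eisRe_eq_zero_or_sq_eq (by rwa [hrank])
      (finrank_radical_twistedTraceForm_le_two (mem_bot_of_frobeniusAlgEquiv_pow_eq_self hF hk) hc)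
  have hhalf {c : F} (hc : c ≠ 0)
      (h : 2 * traceSum v (a, b) = ∑ y, eisRe (twistedTraceForm σ c b y)) :
      traceSum v (a, b) = 0 ∨ traceSum v (a, b) ^ 2 = 3 ^ (m + 1) := by
    have := hvalue hc
    rw [← h] at this
    exact this.imp (fun h ↦ by linarith) fun h ↦ by linarith
  obtain rfl | ha := eq_or_ne a 0
  · have hb : b ≠ 0 := by rintro rfl; exact hab rfl
    have hbot := hzero (radical_twistedTraceForm_zero_left (σ := σ) hb)
    rw [neg_zero, hbot] at hsum
    exact .inl (by linarith)
  · rcases radical_twistedTraceForm_eq_bot_or_neg_eq_bot (b := b)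
      (eq_zero_of_frobeniusAlgEquiv_pow_eq_neg (by decide) hF hm hk) ha with h | h
    · exact hhalf (neg_ne_zero.mpr ha) (by rw [hsum, hzero h, zero_add])
    · exact hhalf ha (by rw [hsum, hzero h, add_zero])

end TraceSum

section WeightDistribution

variable {F : Type*} [Field F] [Fintype F] {m k v : ℕ}

lemma pow_eq_sq_of_modEq {n : ℕ} (hn : n ≠ 0) (h : n ≡ 2 [MOD Fintype.card F - 1]) (y : F) :
    y ^ n = y ^ 2 := by
  obtain rfl | hy := eq_or_ne y 0
  · rw [zero_pow hn, zero_pow two_ne_zero]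
  · exact pow_eq_pow_of_modEq h (FiniteField.pow_card_sub_one_eq_one y hy)

variable [Algebra (ZMod 3) F]

/-- The word `c(a, b)` of the cyclic code, with `i`-th entry `Tr (a α ^ i) + Tr (b α ^ (i v))`. The
length `n` is a free parameter; it is the order of `α` in the case of interest. -/
noncomputable def cyclicCodeword (n v : ℕ) (α : F) (ab : F × F) (i : Fin n) : ZMod 3 :=
  Algebra.trace (ZMod 3) F (ab.1 * α ^ (i : ℕ)) +
    Algebra.trace (ZMod 3) F (ab.2 * α ^ ((i : ℕ) * v))

lemma three_mul_hammingNorm_cyclicCodeword {n : ℕ} (hn : n = Fintype.card F - 1) {α : Fˣ}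
    (hα : ∀ x : Fˣ, x ∈ Subgroup.zpowers α) (hv : v ≠ 0) (ab : F × F) :
    3 * (hammingNorm (cyclicCodeword n v (α : F) ab) : ℤ) =
      2 * Fintype.card F - traceSum v ab := by
  let f (x : F) : ZMod 3 := Algebra.trace (ZMod 3) F (ab.1 * x + ab.2 * x ^ v)
  have hword : cyclicCodeword n v (α : F) ab = fun i : Fin n ↦ f (α ^ (i : ℕ)) :=
    funext fun i ↦ by simp only [cyclicCodeword, f, pow_mul, map_add]
  have hsum : traceSum v ab = 2 * Fintype.card F - 3 * #{x | f x ≠ 0} := by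
    rw [traceSum, sum_congr rfl fun x _ ↦ eisRe_eq_two_sub_ite _, sum_sub_distrib, ← mul_sum,
      sum_boole, sum_const, card_univ, nsmul_eq_mul, mul_comm]
  rw [hword, hammingNorm_comp_generator_pow hn hα (by simp [f, hv]), hsum, sub_sub_cancel]

lemma card_traceSum_fiber (hm : Odd m) (hF : Fintype.card F = 3 ^ m) {s : ℕ}
    (hs : 3 ^ m = 3 * s ^ 2) (hk : k.Coprime m) (hv : v * (3 ^ k + 1) ≡ 2 [MOD 3 ^ m - 1])
    (hv₀ : v ≠ 0) (hv₂ : Even v) (t : ℤ) :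
    (#{ab : F × F | traceSum v ab = t} : ℤ) =
      if t = 6 * (s : ℤ) ^ 2 then 1
      else if t = 3 * s then (3 * (s : ℤ) ^ 2 - 1) * (s ^ 2 + s)
      else if t = 0 then (3 * (s : ℤ) ^ 2 - 1) * (s ^ 2 + 1)
      else if t = -(3 * s) then (3 * (s : ℤ) ^ 2 - 1) * (s ^ 2 - s)
      else 0 := by
  have hcard : (Fintype.card F : ℤ) = 3 * (s : ℤ) ^ 2 := mod_cast hF.trans hs
  have hpos : 0 < (s : ℤ) := by
    refine Int.natCast_pos.mpr (Nat.pos_of_ne_zero ?_)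
    rintro rfl
    exact (pow_ne_zero m three_ne_zero) hs
  refine card_fiber_of_power_moments hpos (i₀ := 0) ?_ (fun ab hab ↦ ?_) ?_ ?_ ?_ t
  · rw [traceSum_zero, hcard]
    ring
  · have hev := pow_eq_sq_of_modEq (F := F) (mul_ne_zero (3 ^ k).succ_ne_zero hv₀)
      (by rwa [hF, mul_comm])
    refine (traceSum_eq_zero_or_sq_eq hF hm hk hv₂ hev hab).imp_right fun h ↦ ?_
    refine sq_eq_sq_iff_eq_or_eq_neg.mp (h.trans ?_)
    rw [pow_succ, show (3 : ℤ) ^ m = 3 * (s : ℤ) ^ 2 from mod_cast hs]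
    ring
  · rw [Fintype.card_prod, Nat.cast_mul, hcard]
    ring
  · rw [sum_traceSum hv₀, hcard]
    ring
  · rw [sum_traceSum_sq hv₀ hv₂, hcard]
    ring

theorem stmt7_general (hm : Odd m) (hF : Fintype.card F = 3 ^ m) {α : Fˣ}
    (hα : ∀ x : Fˣ, x ∈ Subgroup.zpowers α) (hk : k.Coprime m)
    (hv : v * (3 ^ k + 1) ≡ 2 [MOD 3 ^ m - 1]) (hv₀ : v ≠ 0) (hv₂ : Even v) (w : ℕ) :
    {ab : F × F | hammingNorm (cyclicCodeword (3 ^ m - 1) v (α : F) ab) = w}.ncard =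
      if w = 0 then 1
      else if w = 2 * 3 ^ (m - 1) - 3 ^ ((m - 1) / 2) then
        (3 ^ m - 1) * (3 ^ (m - 1) + 3 ^ ((m - 1) / 2))
      else if w = 2 * 3 ^ (m - 1) then
        (3 ^ m - 1) * (3 ^ m - 2 * 3 ^ (m - 1) + 1)
      else if w = 2 * 3 ^ (m - 1) + 3 ^ ((m - 1) / 2) then
        (3 ^ m - 1) * (3 ^ (m - 1) - 3 ^ ((m - 1) / 2))
      else 0 := by
  obtain ⟨j, hj⟩ := id hm
  generalize hs : 3 ^ ((m - 1) / 2) = s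
  have hq : 3 ^ m = 3 * s ^ 2 := by
    rw [← hs, show (m - 1) / 2 = j by omega, hj]
    ring
  have hq' : 3 ^ (m - 1) = s ^ 2 := by
    rw [← hs, ← pow_mul, show (m - 1) / 2 * 2 = m - 1 by omega]
  have hfiber (ab : F × F) : hammingNorm (cyclicCodeword (3 ^ m - 1) v (α : F) ab) = w ↔
      traceSum v ab = 6 * (s : ℤ) ^ 2 - 3 * w := by
    have hweight := three_mul_hammingNorm_cyclicCodeword (by rw [hF]) hα hv₀ ab
    rw [hF.trans hq] at hweight
    push_cast at hweight
    omega
  simp only [hfiber]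
  rw [← coe_filter_univ, Set.ncard_coe_finset, ← Int.natCast_inj,
    card_traceSum_fiber hm hF hq hk hv hv₀ hv₂, hq, hq']
  have hs₁ : 1 ≤ s := hs ▸ Nat.one_le_pow _ _ three_pos
  have hs₂ : s ≤ s ^ 2 := Nat.le_self_pow two_ne_zero s
  have h₁ : (6 * s ^ 2 - 3 * w : ℤ) = 6 * s ^ 2 ↔ w = 0 := by omega
  have h₂ : (6 * s ^ 2 - 3 * w : ℤ) = 3 * s ↔ w = 2 * s ^ 2 - s := by
    zify [(by omega : s ≤ 2 * s ^ 2)]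
    omega
  have h₃ : (6 * s ^ 2 - 3 * w : ℤ) = 0 ↔ w = 2 * s ^ 2 := by zify; omega
  have h₄ : (6 * s ^ 2 - 3 * w : ℤ) = -(3 * s) ↔ w = 2 * s ^ 2 + s := by zify; omega
  simp only [h₁, h₂, h₃, h₄, show 3 * s ^ 2 - 2 * s ^ 2 = s ^ 2 by omega, Nat.cast_ite]
  push_cast [hs₂, (by omega : 1 ≤ 3 * s ^ 2)]
  rfl

/-- The exponent `v` of the code, a solution of `v (3 ^ k + 1) ≡ 2` modulo `3 ^ m - 1` with
`k = (m + 1) / 8` when `8 ∣ m + 1`. -/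
def codeExponent (m : ℕ) : ℕ :=
  (3 ^ ((m + 1) / 8) - 1) * (3 ^ ((m + 1) / 4) + 1) * (3 ^ ((m + 1) / 2) + 1)

lemma codeExponent_mul_eq (hm : 8 ∣ m + 1) :
    codeExponent m * (3 ^ ((m + 1) / 8) + 1) = 3 ^ (m + 1) - 1 := by
  obtain ⟨n, hn⟩ := hm
  rw [codeExponent, show (m + 1) / 8 = n by omega, show (m + 1) / 4 = 2 * n by omega,
    show (m + 1) / 2 = 4 * n by omega, hn]
  zify [Nat.one_le_pow n 3 three_pos, Nat.one_le_pow (8 * n) 3 three_pos]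
  ring

lemma codeExponent_mul_modEq_two (hm : 8 ∣ m + 1) :
    codeExponent m * (3 ^ ((m + 1) / 8) + 1) ≡ 2 [MOD 3 ^ m - 1] := by
  have hq : 3 ^ (m + 1) - 1 = 2 + 3 * (3 ^ m - 1) := by
    have := Nat.one_le_pow m 3 three_pos
    omega
  rw [codeExponent_mul_eq hm, hq, Nat.ModEq, Nat.add_mul_mod_self_right]

lemma codeExponent_ne_zero (hm : 8 ∣ m + 1) : codeExponent m ≠ 0 := by
  have : 1 < 3 ^ (m + 1) := Nat.one_lt_pow m.succ_ne_zero (by decide)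
  exact left_ne_zero_of_mul (b := 3 ^ ((m + 1) / 8) + 1) (by rw [codeExponent_mul_eq hm]; omega)

lemma even_codeExponent : Even (codeExponent m) :=
  (Odd.pow (by decide : Odd 3)).add_one.mul_left _

lemma coprime_succ_div_eight (hm : 8 ∣ m + 1) : ((m + 1) / 8).Coprime m :=
  .of_dvd_left (Nat.div_dvd_of_dvd hm) (by simp)

end WeightDistribution

/-- weight distribution of the ternary cyclic code `C_{(1,v,3,m)}` with
`m ≡ 7 (mod 8)` and `v = (3^{(m+1)/8}-1)(3^{(m+1)/4}+1)(3^{(m+1)/2}+1)`;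
codewords are `c(a,b)_i = Tr(a α^i) + Tr(b α^{iv})`. -/
theorem stmt7 {m : ℕ} (hm : m % 8 = 7)
    {F : Type*} [Field F] [Fintype F] [Algebra (ZMod 3) F]
    (hF : Fintype.card F = 3 ^ m)
    (α : Fˣ) (hα : ∀ x : Fˣ, x ∈ Subgroup.zpowers α)
    (v : ℕ)
    (hv : v = (3 ^ ((m + 1) / 8) - 1) * (3 ^ ((m + 1) / 4) + 1) * (3 ^ ((m + 1) / 2) + 1))
    (c : F × F → Fin (3 ^ m - 1) → ZMod 3)
    (hc : c = fun (ab : F × F) (i : Fin (3 ^ m - 1)) =>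
      Algebra.trace (ZMod 3) F (ab.1 * (α : F) ^ (i : ℕ)) +
        Algebra.trace (ZMod 3) F (ab.2 * (α : F) ^ ((i : ℕ) * v))) :
    ∀ w : ℕ,
      {ab : F × F | hammingNorm (c ab) = w}.ncard =
        if w = 0 then 1
        else if w = 2 * 3 ^ (m - 1) - 3 ^ ((m - 1) / 2) then
          (3 ^ m - 1) * (3 ^ (m - 1) + 3 ^ ((m - 1) / 2))
        else if w = 2 * 3 ^ (m - 1) then
          (3 ^ m - 1) * (3 ^ m - 2 * 3 ^ (m - 1) + 1)
        else if w = 2 * 3 ^ (m - 1) + 3 ^ ((m - 1) / 2) then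
          (3 ^ m - 1) * (3 ^ (m - 1) - 3 ^ ((m - 1) / 2))
        else 0 := by
  have hm₈ : 8 ∣ m + 1 := by omega
  obtain rfl : v = codeExponent m := hv
  exact hc ▸ stmt7_general (Nat.odd_iff.mpr (by omega)) hF hα (coprime_succ_div_eight hm₈)
    (codeExponent_mul_modEq_two hm₈) (codeExponent_ne_zero hm₈) even_codeExponent
end

section
/- Let m be odd, q = 3^m, let γ be a generator of the multiplicative group GF(q²)*, and set ε = γ^{(q²−1)/4}. Then ε² = −1, and a pair (x₁, y₁) ∈ GF(q²) × GF(q²) satisfies x₁² + y₁² = −1 if and only if there exists θ ∈ GF(q²)* such that x₁ = ε(θ + θ^{−1}) and y₁ = θ − θ^{−1}. Furthermore, for any positive integer h, writing s = 3^h + 1, one has x₁^s = (θ^s + θ^{−s} + θ^{3^h−1} + θ^{1−3^h})·ε^s and y₁^s = θ^s + θ^{−s} − (θ^{3^h−1} + θ^{1−3^h}). -/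
/-!
Since `ε ^ 2 = γ ^ ((q ^ 2 - 1) / 2)`, Euler's criterion gives `ε ^ 2 = -1` as soon as `γ` is not a
square, and a generator of a group of even order is never a square. Then
`x ^ 2 + y ^ 2 = -1` says `(ε * x - y) * (ε * x + y) = 1`, and `θ = ε * x - y` determines `x` and
`y` because `2 = -1` in characteristic three. The formulas for `s = 3 ^ h + 1` come from the
additivity of `t ↦ t ^ 3 ^ h`.
-/

section ExpChar

variable (p n : ℕ)

theorem add_pow_expChar_pow_add_one {R : Type*} [CommSemiring R] [ExpChar R p] (a b : R) :
    (a + b) ^ (p ^ n + 1) =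
      a ^ (p ^ n + 1) + b ^ (p ^ n + 1) + a * b * (a ^ (p ^ n - 1) + b ^ (p ^ n - 1)) := by
  have hpn : p ^ n ≠ 0 := pow_ne_zero n (expChar_ne_zero R p)
  calc (a + b) ^ (p ^ n + 1)
      = (a ^ p ^ n + b ^ p ^ n) * (a + b) := by rw [pow_succ, add_pow_expChar_pow]
    _ = a ^ (p ^ n + 1) + b ^ (p ^ n + 1) + (b * a ^ p ^ n + a * b ^ p ^ n) := by ring
    _ = _ := by rw [← mul_pow_sub_one hpn a, ← mul_pow_sub_one hpn b]; ring

theorem sub_pow_expChar_pow_add_one {R : Type*} [CommRing R] [ExpChar R p] (a b : R) :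
    (a - b) ^ (p ^ n + 1) =
      a ^ (p ^ n + 1) + b ^ (p ^ n + 1) - a * b * (a ^ (p ^ n - 1) + b ^ (p ^ n - 1)) := by
  have hpn : p ^ n ≠ 0 := pow_ne_zero n (expChar_ne_zero R p)
  calc (a - b) ^ (p ^ n + 1)
      = (a ^ p ^ n - b ^ p ^ n) * (a - b) := by rw [pow_succ, sub_pow_expChar_pow]
    _ = a ^ (p ^ n + 1) + b ^ (p ^ n + 1) - (b * a ^ p ^ n + a * b ^ p ^ n) := by ring
    _ = _ := by rw [← mul_pow_sub_one hpn a, ← mul_pow_sub_one hpn b]; ring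

end ExpChar

theorem sq_add_sq_eq_neg_one_iff_exists_units {R : Type*} [CommRing R] [CharP R 3] {ε : R}
    (hε : ε ^ 2 = -1) (x y : R) :
    x ^ 2 + y ^ 2 = -1 ↔ ∃ θ : Rˣ, x = ε * (θ + ↑θ⁻¹) ∧ y = θ - ↑θ⁻¹ := by
  have three_eq_zero : (3 : R) = 0 := CharP.cast_eq_zero R 3
  constructor
  · intro hxy
    have hmul : (ε * x - y) * (ε * x + y) = 1 := by linear_combination x ^ 2 * hε - hxy
    refine ⟨Units.mkOfMulEqOne _ _ hmul, ?_, ?_⟩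
    · change x = ε * ((ε * x - y) + (ε * x + y))
      linear_combination -2 * x * hε + x * three_eq_zero
    · change y = (ε * x - y) - (ε * x + y)
      linear_combination y * three_eq_zero
  · rintro ⟨θ, rfl, rfl⟩
    linear_combination (θ + ↑θ⁻¹ : R) ^ 2 * hε - 4 * θ.mul_inv - three_eq_zero

theorem sq_add_sq_eq_neg_one_iff_exists_ne_zero {K : Type*} [Field K] [CharP K 3] {ε : K}
    (hε : ε ^ 2 = -1) (x y : K) :
    x ^ 2 + y ^ 2 = -1 ↔ ∃ θ : K, θ ≠ 0 ∧ x = ε * (θ + θ⁻¹) ∧ y = θ - θ⁻¹ := by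
  simp only [sq_add_sq_eq_neg_one_iff_exists_units hε, Units.exists0, Units.val_inv_eq_inv_val,
    Units.val_mk0, exists_prop]

theorem not_isSquare_of_forall_mem_zpowers {G : Type*} [Group G] (hG : Even (Nat.card G)) {g : G}
    (hg : ∀ x : G, x ∈ Subgroup.zpowers g) : ¬IsSquare g := by
  rintro ⟨r, hr⟩
  obtain ⟨k, rfl⟩ := hg r
  have hmod : 1 ≡ k + k [ZMOD orderOf g] := by
    rw [← zpow_eq_zpow_iff_modEq, zpow_one, zpow_add]
    exact hr
  have htwo : (2 : ℤ) ∣ orderOf g := by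
    rw [orderOf_eq_card_of_forall_mem_zpowers hg]
    exact_mod_cast hG.two_dvd
  have hparity := hmod.of_dvd htwo
  simp only [Int.ModEq] at hparity
  omega

section FiniteField

variable {K : Type*} [Field K] [Fintype K]

theorem not_isSquare_of_odd_card_of_forall_mem_zpowers (hK : Odd (Fintype.card K)) {γ : Kˣ}
    (hγ : ∀ x : Kˣ, x ∈ Subgroup.zpowers γ) : ¬IsSquare γ := by
  refine not_isSquare_of_forall_mem_zpowers ?_ hγ
  rw [Nat.card_units, Nat.card_eq_fintype_card]
  exact Nat.Odd.sub_odd hK odd_one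

theorem sq_pow_card_sub_one_div_four_eq_neg_one (hK : Fintype.card K % 4 = 1) {γ : Kˣ}
    (hγ : ¬IsSquare γ) : ((γ : K) ^ ((Fintype.card K - 1) / 4)) ^ 2 = -1 := by
  have hchar : ringChar K ≠ 2 := fun h ↦ by
    have := FiniteField.even_card_iff_char_two.mp h
    omega
  have hexp : (Fintype.card K - 1) / 4 * 2 = Fintype.card K / 2 := by omega
  have hne : (γ : K) ^ (Fintype.card K / 2) ≠ 1 := by
    rwa [FiniteField.unit_isSquare_iff hchar, Units.ext_iff, Units.val_pow_eq_pow_val,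
      Units.val_one] at hγ
  rw [← pow_mul, hexp]
  exact (FiniteField.pow_dichotomy hchar γ.ne_zero).resolve_left hne

theorem stmt11_general {m : ℕ} (hK : Fintype.card K = (3 ^ m) ^ 2) {γ : Kˣ} (hγ : ¬IsSquare γ)
    {ε : K} (hε : ε = (γ : K) ^ (((3 ^ m) ^ 2 - 1) / 4)) :
    ε ^ 2 = -1 ∧
    (∀ x₁ y₁ : K, x₁ ^ 2 + y₁ ^ 2 = -1 ↔
        ∃ θ : K, θ ≠ 0 ∧ x₁ = ε * (θ + θ⁻¹) ∧ y₁ = θ - θ⁻¹) ∧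
    (∀ h : ℕ, ∀ θ : K, θ ≠ 0 →
        (ε * (θ + θ⁻¹)) ^ (3 ^ h + 1) =
          (θ ^ (3 ^ h + 1) + θ⁻¹ ^ (3 ^ h + 1) + θ ^ (3 ^ h - 1) + θ⁻¹ ^ (3 ^ h - 1)) *
            ε ^ (3 ^ h + 1) ∧
        (θ - θ⁻¹) ^ (3 ^ h + 1) =
          θ ^ (3 ^ h + 1) + θ⁻¹ ^ (3 ^ h + 1) - (θ ^ (3 ^ h - 1) + θ⁻¹ ^ (3 ^ h - 1))) := by
  have : CharP K 3 := charP_of_card_eq_prime_pow (hK.trans (pow_mul 3 m 2).symm)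
  have hmod : Fintype.card K % 4 = 1 := by
    rw [hK, pow_right_comm, Nat.pow_mod]
    norm_num
  have hε_sq : ε ^ 2 = -1 := by
    rw [hε, ← hK]
    exact sq_pow_card_sub_one_div_four_eq_neg_one hmod hγ
  refine ⟨hε_sq, sq_add_sq_eq_neg_one_iff_exists_ne_zero hε_sq, fun h θ hθ ↦ ⟨?_, ?_⟩⟩
  · rw [mul_pow, add_pow_expChar_pow_add_one, mul_inv_cancel₀ hθ]
    ring
  · rw [sub_pow_expChar_pow_add_one, mul_inv_cancel₀ hθ, one_mul]

end FiniteField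

/-- with `m` odd, `q = 3^m`, `γ` a generator of `GF(q²)*` and
`ε = γ^{(q²-1)/4}`: one has `ε² = -1`; the solutions of `x₁² + y₁² = -1` in `GF(q²)²`
are exactly the pairs `(ε(θ + θ⁻¹), θ - θ⁻¹)` for `θ ∈ GF(q²)*`; and for any positive
integer `h`, writing `s = 3^h + 1`, such `x₁, y₁` satisfy
`x₁^s = (θ^s + θ^{-s} + θ^{3^h-1} + θ^{1-3^h})·ε^s` and
`y₁^s = θ^s + θ^{-s} - (θ^{3^h-1} + θ^{1-3^h})`. -/
theorem stmt11 {m : ℕ} (hm : Odd m)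
    {K : Type*} [Field K] [Fintype K] (hK : Fintype.card K = (3 ^ m) ^ 2)
    (γ : Kˣ) (hγ : ∀ x : Kˣ, x ∈ Subgroup.zpowers γ)
    (ε : K) (hε : ε = (γ : K) ^ (((3 ^ m) ^ 2 - 1) / 4)) :
    ε ^ 2 = -1 ∧
    (∀ x₁ y₁ : K, x₁ ^ 2 + y₁ ^ 2 = -1 ↔
        ∃ θ : K, θ ≠ 0 ∧ x₁ = ε * (θ + θ⁻¹) ∧ y₁ = θ - θ⁻¹) ∧
    (∀ h : ℕ, 0 < h → ∀ θ : K, θ ≠ 0 →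
        (ε * (θ + θ⁻¹)) ^ (3 ^ h + 1) =
          (θ ^ (3 ^ h + 1) + θ⁻¹ ^ (3 ^ h + 1) + θ ^ (3 ^ h - 1) + θ⁻¹ ^ (3 ^ h - 1)) *
            ε ^ (3 ^ h + 1) ∧
        (θ - θ⁻¹) ^ (3 ^ h + 1) =
          θ ^ (3 ^ h + 1) + θ⁻¹ ^ (3 ^ h + 1) - (θ ^ (3 ^ h - 1) + θ⁻¹ ^ (3 ^ h - 1))) := by
  have hγ_sq : ¬IsSquare γ :=
    not_isSquare_of_odd_card_of_forall_mem_zpowers (hK ▸ (Odd.pow (by decide)).pow) hγ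
  exact (stmt11_general hK hγ_sq hε).imp_right (And.imp_right fun hpow h _ ↦ hpow h)
end
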